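/- Let f : ℝ → ℝ be smooth, (ρ_ε)_{ε∈(0,1)} a generalized delta net, x_ε (ε < ε₀) the solution of ẍ_ε = ½ f'(x_ε) ρ_ε with x_ε(−1) = x₀, ẋ_ε(−1) = 0, and let N_ε = (N^u_ε, N^v_ε, N^x_ε, N^y_ε) be the solution of the regularized Jacobi system with initial conditions N^a_ε(−1) = 0 for all a and (Ṅ^u_ε, Ṅ^v_ε, Ṅ^x_ε, Ṅ^y_ε)(−1) = (a, b, 0, 0). Then N^x_ε converges distributionally to ½ a f'(x₀)(u₊ + θ(u)): for every smooth compactly supported φ : ℝ → ℝ, ∫_ℝ N^x_ε(u) φ(u) du → ½ a f'(x₀) ∫_0^∞ (1 + u) φ(u) du as ε → 0. -/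

import Mathlib

open MeasureTheory Filter Set

/-- A generalized delta net: a family `(ρ ε)_{ε ∈ (0,1)}` of smooth functions with
(a') `supp ρ_ε ⊆ [-ε, ε]`, (b) `∫ ρ_ε → 1` as `ε → 0`, and (c) `∫ |ρ_ε|` uniformly bounded. -/
def IsGenDeltaNet (ρ : ℝ → ℝ → ℝ) : Prop :=
  (∀ ε ∈ Ioo (0:ℝ) 1, ContDiff ℝ (⊤ : ℕ∞) (ρ ε)) ∧
  (∀ ε ∈ Ioo (0:ℝ) 1, Function.support (ρ ε) ⊆ Icc (-ε) ε) ∧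
  Tendsto (fun ε => ∫ x, ρ ε x) (nhdsWithin 0 (Ioo 0 1)) (nhds 1) ∧
  ∃ C : ℝ, ∀ ε ∈ Ioo (0:ℝ) 1, (∫ x, |ρ ε x|) ≤ C

/-- `x` is the (smooth, globally defined) background geodesic of the axisymmetric impulsive
pp-wave restricted to the hypersurface `y = 0`: `ẍ(u) = ½ f'(x(u)) ρ_ε(u)`, with
`x(-1) = x₀`, `ẋ(-1) = 0`. -/
def IsXSol1 (f : ℝ → ℝ) (ρ : ℝ → ℝ → ℝ) (x₀ : ℝ) (ε : ℝ) (x : ℝ → ℝ) : Prop :=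
  ContDiff ℝ (⊤ : ℕ∞) x ∧ (∀ u, deriv (deriv x) u = (ρ ε u / 2) * deriv f (x u)) ∧
  x (-1) = x₀ ∧ deriv x (-1) = 0

/-- The regularized Jacobi (geodesic deviation) system of the axisymmetric impulsive
pp-wave along the background geodesic `x`:
`N̈ᵘ = 0`, `N̈ʸ = 0`,
`N̈ˣ = [Ṅᵘ f'(x) + ½ Nˣ f''(x)] ρ + ½ f'(x) Nᵘ ρ̇`,
`N̈ᵛ = 2 (Nˣ f'(x) ρ)' − Nˣ f'(x) ρ̇ + (Nᵘ f(x) ρ)'' − Nᵘ f''(x) ẋ² ρ − Nᵘ f'(x) ẍ ρ`. -/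
def JacobiEqs (f : ℝ → ℝ) (ρε : ℝ → ℝ) (x : ℝ → ℝ) (Nu Nv Nx Ny : ℝ → ℝ) : Prop :=
  (∀ u, deriv (deriv Nu) u = 0) ∧
  (∀ u, deriv (deriv Ny) u = 0) ∧
  (∀ u, deriv (deriv Nx) u =
    (deriv Nu u * deriv f (x u) + (1 / 2) * Nx u * deriv (deriv f) (x u)) * ρε u
    + (1 / 2) * deriv f (x u) * Nu u * deriv ρε u) ∧
  (∀ u, deriv (deriv Nv) u =
    2 * deriv (fun t => Nx t * deriv f (x t) * ρε t) u
    - Nx u * deriv f (x u) * deriv ρε u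
    + deriv (deriv (fun t => Nu t * f (x t) * ρε t)) u
    - Nu u * deriv (deriv f) (x u) * (deriv x u) ^ 2 * ρε u
    - Nu u * deriv f (x u) * deriv (deriv x) u * ρε u)

/-!
The Jacobi equation linearizes the geodesic equation, and affine reparametrizations of `u` that fix
the initial time `t₀` deform the background geodesic `x_ε` into geodesics. The resulting Jacobi
field has transverse part `a (u - t₀) ẋ_ε`, and this is `Nˣ_ε` by uniqueness for linear equations.
So only the velocity `ẋ_ε` has to be controlled. Its rate of change is a force times the pulse
`ρ_ε`, whose `L¹` norm is bounded; hence `ẋ_ε` stays bounded, `x_ε` moves by `O(ε)` during the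
pulse, and the force is asymptotically frozen at its value at `x₀`. Thus `ẋ_ε → F(x₀) θ` boundedly
off `u = 0`, with `F = ½ f'`, and dominated convergence applies.
-/

open scoped Topology

lemma forall_mem_Icc_lt_of_forall_mem_Ico_lt {α β : Type*} [ConditionallyCompleteLinearOrder α]
    [TopologicalSpace α] [OrderTopology α] [LinearOrder β] [TopologicalSpace β]
    [OrderClosedTopology β] {g : α → β} {p q : α} {δ : β} (hg : Continuous g)
    (hstep : ∀ u ∈ Icc p q, (∀ t ∈ Ico p u, g t < δ) → g u < δ) :
    ∀ u ∈ Icc p q, g u < δ := by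
  by_contra! hexit
  obtain ⟨u, hu, hgu⟩ := hexit
  have hcompact : IsCompact (Icc p q ∩ {t | δ ≤ g t}) :=
    isCompact_Icc.inter_right (isClosed_le continuous_const hg)
  obtain ⟨s, ⟨hs, hgs⟩, hleast⟩ := hcompact.exists_isLeast ⟨u, hu, hgu⟩
  refine (hstep s hs fun t ht => ?_).not_ge hgs
  by_contra! hgt
  exact (hleast ⟨⟨ht.1, ht.2.le.trans hs.2⟩, hgt⟩).not_gt ht.2

variable {E : Type*} [NormedAddCommGroup E] [NormedSpace ℝ E]

lemma norm_sub_integral_smul_le {r : ℝ → ℝ} {w G : ℝ → E} {t₀ u η : ℝ} {y : E}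
    (hr : Continuous r) (hw : ∀ t, HasDerivAt w (r t • G t) t) (hw₀ : w t₀ = 0) (hu : t₀ ≤ u)
    (hG : ∀ t ∈ Ico t₀ u, r t ≠ 0 → ‖G t - y‖ ≤ η) :
    ‖w u - (∫ t in t₀..u, r t) • y‖ ≤ η * ∫ t in t₀..u, |r t| := by
  have hdiff (t : ℝ) : HasDerivAt (fun s => w s - (∫ τ in t₀..s, r τ) • y) (r t • (G t - y)) t := by
    rw [smul_sub]
    exact (hw t).sub ((hr.integral_hasStrictDerivAt t₀ t).hasDerivAt.smul_const y)
  refine image_norm_le_of_norm_deriv_right_le_deriv_boundary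
    (B := fun s => η * ∫ τ in t₀..s, |r τ|) (B' := fun t => η * |r t|)
    (fun t _ => (hdiff t).continuousAt.continuousWithinAt)
    (fun t _ => (hdiff t).hasDerivWithinAt) (by simp [hw₀])
    (fun t => (hr.abs.integral_hasStrictDerivAt t₀ t).hasDerivAt.const_mul η)
    (fun t ht => ?_) (right_mem_Icc.2 hu)
  rw [norm_smul, Real.norm_eq_abs, mul_comm]
  by_cases hrt : r t = 0
  · simp [hrt]
  · exact mul_le_mul_of_nonneg_right (hG t ht hrt) (abs_nonneg _)

lemma eq_zero_of_hasDerivAt_second_order_linear {A : ℝ → E →L[ℝ] E} {M P : ℝ → E} {t₀ : ℝ}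
    (hA : Continuous A) (hM : ∀ t, HasDerivAt M (P t) t) (hP : ∀ t, HasDerivAt P (A t (M t)) t)
    (hM₀ : M t₀ = 0) (hP₀ : P t₀ = 0) : M = 0 := by
  funext t
  obtain ⟨p, q, ht, ht₀⟩ : ∃ p q, t ∈ Ioo p q ∧ t₀ ∈ Ioo p q :=
    ⟨min t t₀ - 1, max t t₀ + 1, by grind⟩
  obtain ⟨L, hL⟩ := (isCompact_Icc (a := p) (b := q)).exists_bound_of_continuousOn hA.continuousOn
  have hlip (s : ℝ) (hs : s ∈ Ioo p q) :
      LipschitzWith (max 1 L.toNNReal) fun z : E × E => (z.2, A s z.1) := by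
    have hAs : ‖A s‖₊ ≤ L.toNNReal := by
      rw [← norm_toNNReal]
      exact Real.toNNReal_le_toNNReal (hL s (Ioo_subset_Icc_self hs))
    refine (LipschitzWith.prod_snd.prodMk ((A s).lipschitz.comp LipschitzWith.prod_fst)).weaken ?_
    simpa only [mul_one] using max_le_max_left 1 hAs
  have hsol (s : ℝ) : HasDerivAt (fun s => (M s, P s)) (P s, A s (M s)) s := (hM s).prodMk (hP s)
  have hzero (s : ℝ) : HasDerivAt (fun _ => (0 : E × E)) ((0 : E), A s 0) s :=
    (hasDerivAt_const s (0 : E × E)).congr_deriv (by rw [map_zero, Prod.mk_zero_zero])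
  have hunique : EqOn (fun s => (M s, P s)) (fun _ => 0) (Ioo p q) :=
    ODE_solution_unique_of_mem_Ioo (s := fun _ => univ)
      (fun s hs => (hlip s hs).lipschitzOnWith) ht₀
      (fun s _ => ⟨hsol s, mem_univ _⟩) (fun s _ => ⟨hzero s, mem_univ _⟩) (by simp [hM₀, hP₀])
  exact congrArg Prod.fst (hunique ht)

lemma eq_mul_sub_of_deriv_deriv_eq_zero {g : ℝ → ℝ} {t₀ a : ℝ} (hg : Differentiable ℝ g)
    (hg' : Differentiable ℝ (deriv g)) (hg'' : ∀ t, deriv (deriv g) t = 0) (hg₀ : g t₀ = 0)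
    (hg₁ : deriv g t₀ = a) (t : ℝ) : g t = a * (t - t₀) := by
  have hslope (s : ℝ) : deriv g s = a :=
    (is_const_of_deriv_eq_zero hg' hg'' s t₀).trans hg₁
  have hdiff (s : ℝ) : HasDerivAt (fun s => g s - a * (s - t₀)) 0 s :=
    ((hg s).hasDerivAt.sub (((hasDerivAt_id s).sub_const t₀).const_mul a)).congr_deriv
      (by rw [hslope, mul_one, sub_self])
  have hconst := is_const_of_deriv_eq_zero (fun s => (hdiff s).differentiableAt)
    (fun s => (hdiff s).deriv) t t₀
  simpa [hg₀, sub_eq_zero] using hconst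

/-- The trajectory `ẍ = r(u) F(x)` with `x(t₀) = x₀`, `ẋ(t₀) = 0`: the transverse part of a
geodesic of a pp-wave with wave profile `H` and pulse `r`, where `F = ½ ∇H`. -/
structure IsPulseTrajectory (F : E → E) (r : ℝ → ℝ) (t₀ : ℝ) (x₀ : E) (x : ℝ → E) : Prop where
  differentiable : Differentiable ℝ x
  hasDerivAt_deriv : ∀ u, HasDerivAt (deriv x) (r u • F (x u)) u
  apply_init : x t₀ = x₀
  deriv_init : deriv x t₀ = 0

/-- A transverse Jacobi field along `x`, vanishing at `t₀` together with its derivative: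
`N̈ = r (2 Ṅᵘ F(x) + DF(x) N) + ṙ Nᵘ F(x)`. The longitudinal component, which solves `N̈ᵘ = 0`, is
already integrated to `Nᵘ = a (u - t₀)`. -/
structure IsTransverseJacobiField (F : E → E) (r : ℝ → ℝ) (x : ℝ → E) (t₀ a : ℝ) (N : ℝ → E) :
    Prop where
  differentiable : Differentiable ℝ N
  hasDerivAt_deriv : ∀ u, HasDerivAt (deriv N)
    (r u • ((2 * a) • F (x u) + fderiv ℝ F (x u) (N u)) + (deriv r u * (a * (u - t₀))) • F (x u)) u
  apply_init : N t₀ = 0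
  deriv_init : deriv N t₀ = 0

namespace IsPulseTrajectory

variable {F : E → E} {r : ℝ → ℝ} {t₀ p q : ℝ} {x₀ : E} {x : ℝ → E}

lemma continuous_deriv (hx : IsPulseTrajectory F r t₀ x₀ x) : Continuous (deriv x) :=
  continuous_iff_continuousAt.2 fun u => (hx.hasDerivAt_deriv u).continuousAt

lemma deriv_eq_zero_of_lt (hx : IsPulseTrajectory F r t₀ x₀ x)
    (hsupp : Function.support r ⊆ Icc p q) (ht₀ : t₀ < p) {u : ℝ} (hu : u < p) :
    deriv x u = 0 := by
  have hfree : EqOn (deriv (deriv x)) 0 (Iio p) := fun t ht => by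
    have hrt : r t = 0 := Function.notMem_support.1 fun h => (hsupp h).1.not_gt ht
    rw [(hx.hasDerivAt_deriv t).deriv, hrt, zero_smul, Pi.zero_apply]
  rw [← hx.deriv_init]
  exact isOpen_Iio.is_const_of_deriv_eq_zero isPreconnected_Iio
    (fun t _ => (hx.hasDerivAt_deriv t).differentiableAt.differentiableWithinAt) hfree hu ht₀

lemma apply_left_eq (hx : IsPulseTrajectory F r t₀ x₀ x)
    (hsupp : Function.support r ⊆ Icc p q) (ht₀ : t₀ < p) : x p = x₀ := by
  rw [← hx.apply_init]
  refine constant_of_has_deriv_right_zero hx.differentiable.continuous.continuousOn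
    (fun t ht => ?_) p (right_mem_Icc.2 ht₀.le)
  rw [← hx.deriv_eq_zero_of_lt hsupp ht₀ ht.2]
  exact (hx.differentiable t).hasDerivAt.hasDerivWithinAt

lemma norm_deriv_le (hx : IsPulseTrajectory F r t₀ x₀ x) (hr : Continuous r)
    (hsupp : Function.support r ⊆ Icc p q) (ht₀ : t₀ < p) {K u : ℝ} (hK : 0 ≤ K)
    (hF : ∀ t ∈ Icc p q, t < u → ‖F (x t)‖ ≤ K) : ‖deriv x u‖ ≤ K * ∫ t, |r t| := by
  rcases lt_or_ge u p with hu | hu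
  · rw [hx.deriv_eq_zero_of_lt hsupp ht₀ hu, norm_zero]
    positivity
  have ht₀u : t₀ ≤ u := ht₀.le.trans hu
  have hint : Integrable r := hr.integrable_of_hasCompactSupport
    (.of_support_subset_isCompact isCompact_Icc hsupp)
  calc ‖deriv x u‖ ≤ K * ∫ t in t₀..u, |r t| := by
        simpa using norm_sub_integral_smul_le (y := 0) hr hx.hasDerivAt_deriv hx.deriv_init ht₀u
          fun t ht hrt => by simpa using hF t (hsupp hrt) ht.2
    _ ≤ K * ∫ t, |r t| := by
        rw [intervalIntegral.integral_of_le ht₀u]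
        exact mul_le_mul_of_nonneg_left
          (setIntegral_le_integral hint.abs (.of_forall fun t => abs_nonneg _)) hK

/-- The bound on the force is only available near `x₀`, so it is propagated by continuous
induction: as long as the trajectory has not left the ball, its velocity is too small for it to
leave during the pulse. -/
lemma norm_sub_lt (hx : IsPulseTrajectory F r t₀ x₀ x) (hr : Continuous r)
    (hsupp : Function.support r ⊆ Icc p q) (ht₀ : t₀ < p) {K δ : ℝ} (hδ : 0 < δ)
    (hF : ∀ y, ‖y - x₀‖ < δ → ‖F y‖ ≤ K) (hsmall : K * (∫ t, |r t|) * (q - p) < δ) :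
    ∀ u ∈ Icc p q, ‖x u - x₀‖ < δ := by
  have hK : 0 ≤ K := (norm_nonneg _).trans (hF x₀ (by simpa))
  refine forall_mem_Icc_lt_of_forall_mem_Ico_lt
    (hx.differentiable.continuous.sub continuous_const).norm fun u hu hball => ?_
  have hvel (t : ℝ) (ht : t ∈ Ico p u) : ‖deriv x t‖ ≤ K * ∫ t, |r t| :=
    hx.norm_deriv_le hr hsupp ht₀ hK fun s hs hst => hF _ (hball s ⟨hs.1, hst.trans ht.2⟩)
  calc ‖x u - x₀‖ ≤ K * (∫ t, |r t|) * (u - p) := by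
        rw [← hx.apply_left_eq hsupp ht₀]
        exact norm_image_sub_le_of_norm_deriv_le_segment'
          (fun t _ => (hx.differentiable t).hasDerivAt.hasDerivWithinAt) hvel u
          (right_mem_Icc.2 hu.1)
    _ ≤ K * (∫ t, |r t|) * (q - p) := by
        gcongr
        exact hu.2
    _ < δ := hsmall

lemma norm_deriv_sub_integral_smul_le (hx : IsPulseTrajectory F r t₀ x₀ x) (hr : Continuous r)
    (hsupp : Function.support r ⊆ Icc p q) (ht₀ : t₀ < p) {η u : ℝ} {y : E}
    (hF : ∀ t ∈ Icc p q, ‖F (x t) - y‖ ≤ η) (hpu : p ≤ u) (hqu : q ≤ u) :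
    ‖deriv x u - (∫ t, r t) • y‖ ≤ η * ∫ t, |r t| := by
  have hsub : Function.support r ⊆ Ioc t₀ u :=
    hsupp.trans fun t ht => ⟨ht₀.trans_le ht.1, ht.2.trans hqu⟩
  have habs : Function.support (fun t => |r t|) ⊆ Ioc t₀ u :=
    (Function.support_comp_subset abs_zero r).trans hsub
  rw [← intervalIntegral.integral_eq_integral_of_support_subset hsub,
    ← intervalIntegral.integral_eq_integral_of_support_subset habs]
  exact norm_sub_integral_smul_le hr hx.hasDerivAt_deriv hx.deriv_init (ht₀.le.trans hpu)
    fun t _ hrt => hF t (hsupp hrt)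

end IsPulseTrajectory

/-- `a (u - t₀) ẋ` solves the Jacobi equation, being the variation of `x` under the affine
reparametrizations of `u` that fix `t₀`. -/
lemma IsTransverseJacobiField.eq_smul_deriv {F : E → E} {r : ℝ → ℝ} {t₀ a : ℝ} {x₀ : E}
    {x N : ℝ → E} (hN : IsTransverseJacobiField F r x t₀ a N)
    (hx : IsPulseTrajectory F r t₀ x₀ x) (hF : ContDiff ℝ 1 F) (hr : Differentiable ℝ r) (u : ℝ) :
    N u = (a * (u - t₀)) • deriv x u := by
  have hscale (t : ℝ) : HasDerivAt (fun t => a * (t - t₀)) a t := by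
    simpa using ((hasDerivAt_id t).sub_const t₀).const_mul a
  have hforce (t : ℝ) : HasDerivAt (fun t => F (x t)) (fderiv ℝ F (x t) (deriv x t)) t :=
    (hF.differentiable one_ne_zero _).hasFDerivAt.comp_hasDerivAt t
      (hx.differentiable t).hasDerivAt
  have hzero := eq_zero_of_hasDerivAt_second_order_linear (t₀ := t₀)
    (A := fun t => r t • fderiv ℝ F (x t))
    (M := fun t => N t - (a * (t - t₀)) • deriv x t)
    (P := fun t => deriv N t - ((a * (t - t₀)) • r t • F (x t) + a • deriv x t))
    (hr.continuous.smul ((hF.continuous_fderiv one_ne_zero).comp hx.differentiable.continuous))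
    (fun t => (hN.differentiable t).hasDerivAt.sub ((hscale t).smul (hx.hasDerivAt_deriv t)))
    (fun t => ?_) (by simp [hN.apply_init]) (by simp [hN.deriv_init, hx.deriv_init])
  · exact sub_eq_zero.1 (congrFun hzero u)
  · refine ((hN.hasDerivAt_deriv t).sub (((hscale t).smul ((hr t).hasDerivAt.smul (hforce t))).add
      ((hx.hasDerivAt_deriv t).const_smul a))).congr_deriv ?_
    simp only [smul_apply, map_sub, map_smul, Pi.smul_apply']
    module

namespace IsGenDeltaNet

variable {ρ : ℝ → ℝ → ℝ}

lemma eventually_contDiff (hρ : IsGenDeltaNet ρ) :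
    ∀ᶠ ε in 𝓝[>] 0, ContDiff ℝ (⊤ : ℕ∞) (ρ ε) :=
  mem_of_superset (Ioo_mem_nhdsGT one_pos) hρ.1

lemma eventually_support_subset (hρ : IsGenDeltaNet ρ) :
    ∀ᶠ ε in 𝓝[>] 0, Function.support (ρ ε) ⊆ Icc (-ε) ε :=
  mem_of_superset (Ioo_mem_nhdsGT one_pos) hρ.2.1

lemma tendsto_integral (hρ : IsGenDeltaNet ρ) :
    Tendsto (fun ε => ∫ t, ρ ε t) (𝓝[>] 0) (𝓝 1) := by
  rw [← nhdsWithin_Ioo_eq_nhdsGT one_pos]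
  exact hρ.2.2.1

lemma exists_eventually_integral_abs_le (hρ : IsGenDeltaNet ρ) :
    ∃ C, ∀ᶠ ε in 𝓝[>] 0, ∫ t, |ρ ε t| ≤ C :=
  hρ.2.2.2.imp fun _ hC => mem_of_superset (Ioo_mem_nhdsGT one_pos) hC

variable {F : E → E} {t₀ : ℝ} {x₀ : E} {x : ℝ → ℝ → E}

lemma eventually_norm_force_sub_lt (hρ : IsGenDeltaNet ρ) (ht₀ : t₀ < 0)
    (hx : ∀ᶠ ε in 𝓝[>] 0, IsPulseTrajectory F (ρ ε) t₀ x₀ (x ε)) (hF : ContinuousAt F x₀)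
    {η : ℝ} (hη : 0 < η) :
    ∀ᶠ ε in 𝓝[>] 0, ∀ t ∈ Icc (-ε) ε, ‖F (x ε t) - F x₀‖ < η := by
  obtain ⟨δ, hδ, hFδ⟩ : ∃ δ > 0, ∀ y, ‖y - x₀‖ < δ → ‖F y - F x₀‖ < η := by
    simpa only [dist_eq_norm] using Metric.continuousAt_iff.1 hF η hη
  obtain ⟨C, hC⟩ := hρ.exists_eventually_integral_abs_le
  set K := ‖F x₀‖ + η
  have hFK (y : E) (hy : ‖y - x₀‖ < δ) : ‖F y‖ ≤ K := by
    have := norm_add_le (F x₀) (F y - F x₀)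
    rw [add_sub_cancel] at this
    linarith [hFδ y hy]
  have hsmall : ∀ᶠ ε in 𝓝[>] (0 : ℝ), K * C * (ε - -ε) < δ := by
    have : Tendsto (fun ε : ℝ => K * C * (ε - -ε)) (𝓝[>] 0) (𝓝 (K * C * (0 - -0))) :=
      (Continuous.tendsto (by fun_prop) 0).mono_left nhdsWithin_le_nhds
    exact this.eventually_lt_const (by simpa)
  filter_upwards [hx, hC, hsmall, hρ.eventually_contDiff, hρ.eventually_support_subset,
    Ioo_mem_nhdsGT (neg_pos.2 ht₀)] with ε hxε hCε hsmallε hρε hsuppε hε t ht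
  refine hFδ _ (hxε.norm_sub_lt hρε.continuous hsuppε (lt_neg.1 hε.2) hδ hFK ?_ t ht)
  refine lt_of_le_of_lt ?_ hsmallε
  have : 0 ≤ ε - -ε := by linarith [hε.1]
  gcongr

lemma exists_eventually_norm_deriv_le (hρ : IsGenDeltaNet ρ) (ht₀ : t₀ < 0)
    (hx : ∀ᶠ ε in 𝓝[>] 0, IsPulseTrajectory F (ρ ε) t₀ x₀ (x ε)) (hF : ContinuousAt F x₀) :
    ∃ V, ∀ᶠ ε in 𝓝[>] 0, ∀ u, ‖deriv (x ε) u‖ ≤ V := by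
  obtain ⟨C, hC⟩ := hρ.exists_eventually_integral_abs_le
  refine ⟨(‖F x₀‖ + 1) * C, ?_⟩
  filter_upwards [hx, hC, hρ.eventually_norm_force_sub_lt ht₀ hx hF one_pos,
    hρ.eventually_contDiff, hρ.eventually_support_subset, Ioo_mem_nhdsGT (neg_pos.2 ht₀)]
    with ε hxε hCε hFε hρε hsuppε hε u
  calc ‖deriv (x ε) u‖ ≤ (‖F x₀‖ + 1) * ∫ t, |ρ ε t| :=
        hxε.norm_deriv_le hρε.continuous hsuppε (lt_neg.1 hε.2) (by positivity) fun t ht _ => by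
          linarith [norm_le_norm_add_norm_sub' (F (x ε t)) (F x₀), hFε t ht]
    _ ≤ (‖F x₀‖ + 1) * C := by gcongr

lemma tendsto_deriv_of_neg (hρ : IsGenDeltaNet ρ) (ht₀ : t₀ < 0)
    (hx : ∀ᶠ ε in 𝓝[>] 0, IsPulseTrajectory F (ρ ε) t₀ x₀ (x ε)) {u : ℝ} (hu : u < 0) :
    Tendsto (fun ε => deriv (x ε) u) (𝓝[>] 0) (𝓝 0) := by
  refine tendsto_const_nhds.congr' ?_
  filter_upwards [hx, hρ.eventually_support_subset, Ioo_mem_nhdsGT (neg_pos.2 ht₀),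
    Ioo_mem_nhdsGT (neg_pos.2 hu)] with ε hxε hsuppε hε hεu
  exact (hxε.deriv_eq_zero_of_lt hsuppε (lt_neg.1 hε.2) (lt_neg.1 hεu.2)).symm

lemma tendsto_deriv_of_pos (hρ : IsGenDeltaNet ρ) (ht₀ : t₀ < 0)
    (hx : ∀ᶠ ε in 𝓝[>] 0, IsPulseTrajectory F (ρ ε) t₀ x₀ (x ε)) (hF : ContinuousAt F x₀)
    {u : ℝ} (hu : 0 < u) : Tendsto (fun ε => deriv (x ε) u) (𝓝[>] 0) (𝓝 (F x₀)) := by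
  obtain ⟨C, hC⟩ := hρ.exists_eventually_integral_abs_le
  have hmass : Tendsto (fun ε => (∫ t, ρ ε t) • F x₀) (𝓝[>] 0) (𝓝 (F x₀)) := by
    simpa only [one_smul] using hρ.tendsto_integral.smul_const (F x₀)
  refine tendsto_of_tendsto_of_dist hmass (Metric.tendsto_nhds.2 fun η hη => ?_)
  have hη' : 0 < η / (|C| + 1) := by positivity
  filter_upwards [hx, hC, hρ.eventually_norm_force_sub_lt ht₀ hx hF hη', hρ.eventually_contDiff,
    hρ.eventually_support_subset, Ioo_mem_nhdsGT (neg_pos.2 ht₀), Ioo_mem_nhdsGT hu]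
    with ε hxε hCε hFε hρε hsuppε hε hεu
  rw [dist_zero_right, Real.norm_of_nonneg dist_nonneg, dist_comm, dist_eq_norm]
  calc ‖deriv (x ε) u - (∫ t, ρ ε t) • F x₀‖ ≤ η / (|C| + 1) * ∫ t, |ρ ε t| :=
        hxε.norm_deriv_sub_integral_smul_le hρε.continuous hsuppε (lt_neg.1 hε.2)
          (fun t ht => (hFε t ht).le) (by linarith [hεu.1]) hεu.2.le
    _ < η / (|C| + 1) * (|C| + 1) := by
        gcongr
        linarith [le_abs_self C]
    _ = η := div_mul_cancel₀ _ (by positivity)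

lemma tendsto_integral_smul_deriv [CompleteSpace E] (hρ : IsGenDeltaNet ρ) (ht₀ : t₀ < 0)
    (hx : ∀ᶠ ε in 𝓝[>] 0, IsPulseTrajectory F (ρ ε) t₀ x₀ (x ε)) (hF : ContinuousAt F x₀)
    {φ : ℝ → ℝ} (hφ : Integrable φ) :
    Tendsto (fun ε => ∫ u, φ u • deriv (x ε) u) (𝓝[>] 0) (𝓝 ((∫ u in Ioi 0, φ u) • F x₀)) := by
  obtain ⟨V, hV⟩ := hρ.exists_eventually_norm_deriv_le ht₀ hx hF
  rw [← integral_smul_const, ← integral_indicator measurableSet_Ioi]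
  refine tendsto_integral_filter_of_dominated_convergence (fun u => ‖φ u‖ * V) ?_ ?_
    (hφ.norm.mul_const V) ?_
  · filter_upwards [hx] with ε hxε
    exact hφ.aestronglyMeasurable.smul hxε.continuous_deriv.aestronglyMeasurable
  · filter_upwards [hV] with ε hVε
    refine .of_forall fun u => ?_
    rw [norm_smul]
    gcongr
    exact hVε u
  · filter_upwards [Measure.ae_ne volume 0] with u hu
    rcases hu.lt_or_gt with hneg | hpos
    · rw [indicator_of_notMem (notMem_Ioi.2 hneg.le)]
      simpa only [smul_zero] using (hρ.tendsto_deriv_of_neg ht₀ hx hneg).const_smul (φ u)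
    · rw [indicator_of_mem (mem_Ioi.2 hpos)]
      exact (hρ.tendsto_deriv_of_pos ht₀ hx hF hpos).const_smul (φ u)

end IsGenDeltaNet

theorem jacobi_Nx_distributional_limit_case1_general [CompleteSpace E] {F : E → E}
    (hF : ContDiff ℝ 1 F) {ρ : ℝ → ℝ → ℝ} (hρ : IsGenDeltaNet ρ) {t₀ a : ℝ} (ht₀ : t₀ < 0)
    {x₀ : E} {x N : ℝ → ℝ → E}
    (hx : ∀ᶠ ε in 𝓝[>] 0, IsPulseTrajectory F (ρ ε) t₀ x₀ (x ε))
    (hN : ∀ᶠ ε in 𝓝[>] 0, IsTransverseJacobiField F (ρ ε) (x ε) t₀ a (N ε))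
    {φ : ℝ → ℝ} (hφ : Integrable fun u => (u - t₀) * φ u) :
    Tendsto (fun ε => ∫ u, φ u • N ε u) (𝓝[>] 0)
      (𝓝 ((a * ∫ u in Ioi 0, (u - t₀) * φ u) • F x₀)) := by
  rw [← integral_const_mul]
  refine (hρ.tendsto_integral_smul_deriv ht₀ hx hF.continuous.continuousAt
    (hφ.const_mul a)).congr' ?_
  filter_upwards [hx, hN, hρ.eventually_contDiff] with ε hxε hNε hρε
  refine integral_congr_ae (.of_forall fun u => ?_)
  simp only [hNε.eq_smul_deriv hxε hF (hρε.differentiable (by simp)) u, smul_smul]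
  ring_nf

lemma IsXSol1.isPulseTrajectory {f : ℝ → ℝ} {ρ : ℝ → ℝ → ℝ} {x₀ ε : ℝ} {x : ℝ → ℝ}
    (hx : IsXSol1 f ρ x₀ ε x) :
    IsPulseTrajectory (fun y => deriv f y / 2) (ρ ε) (-1) x₀ x := by
  obtain ⟨hsmooth, hgeod, hx₀, hx₁⟩ := hx
  obtain ⟨hdiff, hsmooth'⟩ := contDiff_infty_iff_deriv.1 hsmooth
  refine ⟨hdiff, fun u => ?_, hx₀, hx₁⟩
  refine (hsmooth'.differentiable (by simp) u).hasDerivAt.congr_deriv ?_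
  rw [hgeod, smul_eq_mul]
  ring

lemma JacobiEqs.isTransverseJacobiField {f r x Nu Nv Nx Ny : ℝ → ℝ} {a : ℝ}
    (hN : JacobiEqs f r x Nu Nv Nx Ny)
    (hNu : ContDiff ℝ 2 Nu) (hNu₀ : Nu (-1) = 0) (hNu₁ : deriv Nu (-1) = a)
    (hNx : ContDiff ℝ 2 Nx) (hNx₀ : Nx (-1) = 0) (hNx₁ : deriv Nx (-1) = 0) :
    IsTransverseJacobiField (fun y => deriv f y / 2) r x (-1) a Nx := by
  obtain ⟨hNu'', -, hNx'', -⟩ := hN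
  have haffine : Nu = fun u => a * (u - -1) := funext <|
    eq_mul_sub_of_deriv_deriv_eq_zero (hNu.differentiable two_ne_zero)
      hNu.differentiable_deriv_two hNu'' hNu₀ hNu₁
  have hslope (u : ℝ) : deriv Nu u = a := by simp [haffine]
  refine ⟨hNx.differentiable two_ne_zero, fun u => ?_, hNx₀, hNx₁⟩
  refine (hNx.differentiable_deriv_two u).hasDerivAt.congr_deriv ?_
  rw [hNx'', hslope, congrFun haffine u, fderiv_eq_smul_deriv, deriv_div_const]
  simp only [smul_eq_mul]
  ring

/-- With initial conditions `N(-1) = 0`, `Ṅ(-1) = (a,b,0,0)`, the transverse component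
`Nˣ_ε` of the Jacobi field converges distributionally to `½ a f'(x₀)(u₊ + θ(u))`. -/
theorem jacobi_Nx_distributional_limit_case1 (f : ℝ → ℝ) (hf : ContDiff ℝ (⊤ : ℕ∞) f)
    (ρ : ℝ → ℝ → ℝ) (hρ : IsGenDeltaNet ρ) (x₀ a b : ℝ)
    (ε₀ : ℝ) (hε₀ : ε₀ ∈ Ioo (0:ℝ) 1) (x : ℝ → ℝ → ℝ)
    (hx : ∀ ε ∈ Ioo 0 ε₀, IsXSol1 f ρ x₀ ε (x ε))
    (Nu Nv Nx Ny : ℝ → ℝ → ℝ)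
    (hN : ∀ ε ∈ Ioo 0 ε₀,
      (ContDiff ℝ (⊤ : ℕ∞) (Nu ε) ∧ ContDiff ℝ (⊤ : ℕ∞) (Nv ε) ∧
       ContDiff ℝ (⊤ : ℕ∞) (Nx ε) ∧ ContDiff ℝ (⊤ : ℕ∞) (Ny ε)) ∧
      JacobiEqs f (ρ ε) (x ε) (Nu ε) (Nv ε) (Nx ε) (Ny ε) ∧
      (Nu ε (-1) = 0 ∧ Nv ε (-1) = 0 ∧ Nx ε (-1) = 0 ∧ Ny ε (-1) = 0) ∧
      (deriv (Nu ε) (-1) = a ∧ deriv (Nv ε) (-1) = b ∧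
       deriv (Nx ε) (-1) = 0 ∧ deriv (Ny ε) (-1) = 0)) :
    ∀ φ : ℝ → ℝ, ContDiff ℝ (⊤ : ℕ∞) φ → HasCompactSupport φ →
      Tendsto (fun ε => ∫ u, Nx ε u * φ u) (nhdsWithin 0 (Ioo 0 ε₀))
        (nhds ((1 / 2) * a * deriv f x₀ * ∫ u in Ioi (0:ℝ), (1 + u) * φ u)) := by
  intro φ hφ hφc
  rw [nhdsWithin_Ioo_eq_nhdsGT hε₀.1]
  have hsmall : Ioo 0 ε₀ ∈ 𝓝[>] 0 := Ioo_mem_nhdsGT hε₀.1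
  have hfield : ∀ ε ∈ Ioo 0 ε₀,
      IsTransverseJacobiField (fun y => deriv f y / 2) (ρ ε) (x ε) (-1) a (Nx ε) := by
    intro ε hε
    obtain ⟨⟨hNu, -, hNx, -⟩, heqs, ⟨hNu₀, -, hNx₀, -⟩, ⟨hNu₁, -, hNx₁, -⟩⟩ := hN ε hε
    exact heqs.isTransverseJacobiField (contDiff_infty.1 hNu 2) hNu₀ hNu₁
      (contDiff_infty.1 hNx 2) hNx₀ hNx₁
  have hF : ContDiff ℝ 1 fun y => deriv f y / 2 :=
    ((contDiff_infty_iff_deriv.1 hf).2.of_le (by simp)).div_const 2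
  have hint : Integrable fun u => (u - -1) * φ u :=
    (by fun_prop : Continuous fun u => (u - -1) * φ u).integrable_of_hasCompactSupport hφc.mul_left
  convert jacobi_Nx_distributional_limit_case1_general hF hρ (by simp)
    (mem_of_superset hsmall fun ε hε => (hx ε hε).isPulseTrajectory)
    (mem_of_superset hsmall hfield) hint using 2
  · simp only [smul_eq_mul, mul_comm]
  · simp only [sub_neg_eq_add, add_comm, smul_eq_mul]
    ring
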